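/- arXiv:2507.19998 — 2 statements merged into one kernel-verified Lean document; each statement's English description precedes it below -/
import Mathlib

section
/- Let a > −1 and let φ ∈ 𝒮⁺. Then for every t ≠ 0 one has ∫₀^∞ |S_a(t)φ(x)|² x^a dx = ∫₀^∞ |φ(x)|² x^a dx, i.e., the operator S_a(t) is an isometry of L²_a. -/
open MeasureTheory Filter Set

noncomputable def besselJ (ν : ℂ) (z : ℝ) : ℂ :=
  ∑' k : ℕ, ((-1 : ℂ) ^ k / (Complex.Gamma (k + 1) * Complex.Gamma (ν + k + 1))) *
    ((z : ℂ) / 2) ^ (2 * (k : ℂ) + ν)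

noncomputable def DIter : ℕ → (ℝ → ℂ) → (ℝ → ℂ)
  | 0, φ => φ
  | k + 1, φ => fun x => (1 / (x : ℂ)) * deriv (DIter k φ) x

def SPlus (φ : ℝ → ℂ) : Prop :=
  ContDiffOn ℝ (⊤ : ℕ∞) φ (Ioi 0) ∧
  ∀ m k : ℕ, ∃ C : ℝ, ∀ x > (0:ℝ), ‖(x : ℂ) ^ m * DIter k φ x‖ ≤ C

noncomputable def Skernel (a x y t : ℝ) : ℂ :=
  if 0 < t then
    Complex.exp (-(Complex.I) * (((a + 1) * Real.pi / 4 : ℝ) : ℂ)) *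
      (((2 * |t|) ^ (-(a + 1) / 2) : ℝ) : ℂ) *
      (((x * y / (2 * |t|)) ^ ((1 - a) / 2) : ℝ) : ℂ) *
      besselJ (((a - 1) / 2 : ℝ) : ℂ) (x * y / (2 * |t|)) *
      Complex.exp (Complex.I * ((((x ^ 2 + y ^ 2) / (4 * |t|)) : ℝ) : ℂ))
  else
    Complex.exp ((Complex.I) * (((a + 1) * Real.pi / 4 : ℝ) : ℂ)) *
      (((2 * |t|) ^ (-(a + 1) / 2) : ℝ) : ℂ) *
      (((x * y / (2 * |t|)) ^ ((1 - a) / 2) : ℝ) : ℂ) *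
      besselJ (((a - 1) / 2 : ℝ) : ℂ) (x * y / (2 * |t|)) *
      Complex.exp (-(Complex.I) * ((((x ^ 2 + y ^ 2) / (4 * |t|)) : ℝ) : ℂ))

noncomputable def Sop (a t : ℝ) (φ : ℝ → ℂ) (x : ℝ) : ℂ :=
  ∫ y in Ioi (0:ℝ), Skernel a x y t * φ y * ((y ^ a : ℝ) : ℂ)

/-- The entire function `w ↦ ∑ (-w)^k / (k! Γ(κ + k))`, so that
`J_ν(z) = (z / 2)^ν * besselSeries (ν + 1) (z² / 4)`. -/
noncomputable def besselSeries (κ w : ℝ) : ℝ :=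
  ∑' k : ℕ, (-w) ^ k / (k.factorial * Real.Gamma (κ + k))

theorem Gamma_add_nat_pos {κ : ℝ} (hκ : 0 < κ) (k : ℕ) : 0 < Real.Gamma (κ + k) :=
  Real.Gamma_pos_of_pos (by positivity)

theorem inv_Gamma_add_nat_le {κ : ℝ} (hκ : 0 < κ) (k : ℕ) :
    (Real.Gamma (κ + k))⁻¹ ≤ (Real.Gamma κ)⁻¹ + (Real.Gamma (κ + 1))⁻¹ := by
  have h0 : 0 < (Real.Gamma κ)⁻¹ := inv_pos.2 (Real.Gamma_pos_of_pos hκ)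
  have h1 : 0 < (Real.Gamma (κ + 1))⁻¹ := inv_pos.2 (Real.Gamma_pos_of_pos (by linarith))
  have key : ∀ n : ℕ, (Real.Gamma (κ + (n + 1 : ℕ)))⁻¹ ≤ (Real.Gamma (κ + 1))⁻¹ := by
    intro n
    induction n with
    | zero => simp
    | succ n ih =>
      refine le_trans (inv_anti₀ (Gamma_add_nat_pos hκ _) ?_) ih
      have hpos := Gamma_add_nat_pos hκ (n + 1)
      have h : κ + ((n + 1 + 1 : ℕ) : ℝ) = (κ + (n + 1 : ℕ)) + 1 := by push_cast; ring
      rw [h, Real.Gamma_add_one (by positivity)]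
      refine le_mul_of_one_le_left hpos.le ?_
      push_cast
      have : (0 : ℝ) ≤ n := n.cast_nonneg
      linarith
  cases k with
  | zero => simpa using h1.le
  | succ n => linarith [key n]

theorem summable_besselSeries_abs {κ : ℝ} (hκ : 0 < κ) (r : ℝ) :
    Summable fun k : ℕ => |r| ^ k / (k.factorial * Real.Gamma (κ + k)) := by
  refine Summable.of_nonneg_of_le (fun k => ?_) (fun k => ?_)
    ((Real.summable_pow_div_factorial |r|).mul_right
      ((Real.Gamma κ)⁻¹ + (Real.Gamma (κ + 1))⁻¹))
  · have := Gamma_add_nat_pos hκ k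
    positivity
  · rw [← div_div, div_eq_mul_inv (_ / _)]
    exact mul_le_mul_of_nonneg_left (inv_Gamma_add_nat_le hκ k) (by positivity)

theorem summable_besselSeries {κ : ℝ} (hκ : 0 < κ) (w : ℝ) :
    Summable fun k : ℕ => (-w) ^ k / (k.factorial * Real.Gamma (κ + k)) := by
  refine Summable.of_norm_bounded (summable_besselSeries_abs hκ w) fun k => ?_
  have := Gamma_add_nat_pos hκ k
  rw [norm_div, norm_pow, norm_neg, Real.norm_eq_abs, Real.norm_of_nonneg (by positivity)]

theorem hasDerivAt_besselSeries {κ : ℝ} (hκ : 0 < κ) (w : ℝ) :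
    HasDerivAt (besselSeries κ) (-besselSeries (κ + 1) w) w := by
  have hshift : ∀ (r : ℝ) (k : ℕ), ((k + 1 : ℕ) : ℝ) * r ^ (k + 1 - 1) /
      ((k + 1).factorial * Real.Gamma (κ + (k + 1 : ℕ))) =
      r ^ k / (k.factorial * Real.Gamma (κ + 1 + k)) := by
    intro r k
    have h1 := Gamma_add_nat_pos (show 0 < κ + 1 by linarith) k
    have h2 : κ + ((k + 1 : ℕ) : ℝ) = κ + 1 + k := by push_cast; ring
    rw [h2, Nat.factorial_succ, Nat.add_sub_cancel]
    have : ((k + 1 : ℕ) : ℝ) ≠ 0 := by positivity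
    rw [Nat.cast_mul]
    field_simp
  set R := |w| + 1 with hR
  have hsum : Summable fun k : ℕ =>
      (k : ℝ) * R ^ (k - 1) / (k.factorial * Real.Gamma (κ + k)) := by
    rw [← summable_nat_add_iff 1]
    simp_rw [hshift]
    have := summable_besselSeries_abs (show 0 < κ + 1 by linarith) R
    rwa [abs_of_nonneg (by positivity)] at this
  have hmem : w ∈ Metric.ball (0 : ℝ) R := by simp [hR]
  have hbound : ∀ (k : ℕ) (y : ℝ), y ∈ Metric.ball (0 : ℝ) R →
      ‖(k : ℝ) * (-y) ^ (k - 1) * (-1) / (k.factorial * Real.Gamma (κ + k))‖ ≤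
        (k : ℝ) * R ^ (k - 1) / (k.factorial * Real.Gamma (κ + k)) := by
    intro k y hy
    have h1 := Gamma_add_nat_pos hκ k
    have hy' : |y| ≤ R := by
      simpa using (mem_ball_zero_iff.1 hy).le
    rw [norm_div, norm_mul, norm_mul, norm_pow, norm_neg, Real.norm_eq_abs y,
      Real.norm_of_nonneg (show (0 : ℝ) ≤ k.factorial * Real.Gamma (κ + k) by positivity),
      Real.norm_of_nonneg (show (0 : ℝ) ≤ k by positivity), norm_neg, norm_one, mul_one]
    gcongr
  have key := hasDerivAt_tsum_of_isPreconnected (y₀ := w) hsum Metric.isOpen_ball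
    (convex_ball (0 : ℝ) R).isPreconnected
    (g := fun (k : ℕ) y => (-y) ^ k / (k.factorial * Real.Gamma (κ + k)))
    (g' := fun (k : ℕ) y => (k : ℝ) * (-y) ^ (k - 1) * (-1) /
      (k.factorial * Real.Gamma (κ + k)))
    (fun k y _ => (((hasDerivAt_id y).neg.pow k).div_const _)) hbound hmem
    (summable_besselSeries hκ w) hmem
  refine key.congr_deriv ?_
  rw [(Summable.of_norm_bounded hsum fun k => hbound k w hmem).tsum_eq_zero_add, besselSeries,
    ← tsum_neg]
  simp only [Nat.cast_zero, zero_mul, zero_div, zero_add]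
  refine tsum_congr fun k => ?_
  rw [mul_neg_one, neg_div, hshift]

theorem continuous_besselSeries {κ : ℝ} (hκ : 0 < κ) : Continuous (besselSeries κ) :=
  continuous_iff_continuousAt.2 fun w => (hasDerivAt_besselSeries hκ w).continuousAt

/-- The three-term recurrence of the Bessel functions. -/
theorem besselSeries_recurrence {κ : ℝ} (hκ : 0 < κ) (w : ℝ) :
    w * besselSeries (κ + 2) w = κ * besselSeries (κ + 1) w - besselSeries κ w := by
  have s0 := summable_besselSeries hκ w
  have s1 := summable_besselSeries (show 0 < κ + 1 by linarith) w
  have hs := (s1.mul_left κ).sub s0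
  unfold besselSeries
  rw [← tsum_mul_left, ← tsum_mul_left, ← (s1.mul_left κ).tsum_sub s0, hs.tsum_eq_zero_add]
  have h0 : κ * ((-w) ^ 0 / ((Nat.factorial 0 : ℝ) * Real.Gamma (κ + 1 + (0 : ℕ)))) -
      (-w) ^ 0 / ((Nat.factorial 0 : ℝ) * Real.Gamma (κ + (0 : ℕ))) = 0 := by
    have := Real.Gamma_pos_of_pos hκ
    simp only [pow_zero, Nat.factorial_zero, Nat.cast_one, Nat.cast_zero, add_zero, one_mul]
    rw [Real.Gamma_add_one hκ.ne']
    field_simp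
    ring
  rw [h0, zero_add]
  refine tsum_congr fun k => ?_
  have e1 : κ + 2 + (k : ℝ) = (κ + k + 1) + 1 := by ring
  have e2 : κ + 1 + ((k + 1 : ℕ) : ℝ) = (κ + k + 1) + 1 := by push_cast; ring
  have e3 : κ + ((k + 1 : ℕ) : ℝ) = κ + k + 1 := by push_cast; ring
  have hp : 0 < κ + k + 1 := by positivity
  have hG := Real.Gamma_pos_of_pos hp
  rw [e1, e2, e3, Real.Gamma_add_one hp.ne', Nat.factorial_succ]
  have hk : ((k : ℝ) + 1) ≠ 0 := by positivity
  push_cast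
  field_simp
  ring

theorem besselSeries_growth {κ : ℝ} (hκ : 0 < κ) :
    ∃ C, 0 ≤ C ∧ ∀ w, 0 ≤ w → |besselSeries κ w| ≤ C * (1 + w) := by
  have hκ1 : 0 < κ + 1 := by linarith
  let Q : ℝ → ℝ := fun w => besselSeries (κ + 1) w ^ 2 + besselSeries κ w ^ 2 / w
  have hQ : ∀ w, 0 < w → HasDerivAt Q
      (-(2 * κ * besselSeries (κ + 1) w ^ 2 / w + besselSeries κ w ^ 2 / w ^ 2)) w := by
    intro w hw
    have hrec := besselSeries_recurrence hκ w
    have hd := ((hasDerivAt_besselSeries hκ1 w).pow 2).add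
      (((hasDerivAt_besselSeries hκ w).pow 2).div (hasDerivAt_id w) hw.ne')
    refine hd.congr_deriv ?_
    have h2 : besselSeries (κ + 1 + 1) w =
        (κ * besselSeries (κ + 1) w - besselSeries κ w) / w := by
      rw [eq_div_iff hw.ne', ← hrec, add_assoc, one_add_one_eq_two]
      ring
    rw [h2]
    simp only [id, Nat.cast_ofNat, Pi.pow_apply]
    field_simp
    ring
  have hanti : AntitoneOn Q (Ici 1) := by
    have hpos : ∀ w ∈ Ici (1 : ℝ), 0 < w := fun w hw => lt_of_lt_of_le one_pos hw
    refine antitoneOn_of_deriv_nonpos (convex_Ici 1)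
      (fun w hw => (hQ w (hpos w hw)).continuousAt.continuousWithinAt)
      (fun w hw => (hQ w (hpos w (interior_subset hw))).differentiableAt.differentiableWithinAt)
      fun w hw => ?_
    have hw0 := hpos w (interior_subset hw)
    rw [(hQ w hw0).deriv]
    exact neg_nonpos.2 (by positivity)
  obtain ⟨M, hM⟩ := isCompact_Icc.exists_bound_of_continuousOn (s := Icc (0 : ℝ) 1)
    (continuous_besselSeries hκ).continuousOn
  have hM0 : 0 ≤ M := (norm_nonneg _).trans (hM 0 (by simp))
  have hQ1 : 0 ≤ Q 1 := by positivity
  refine ⟨M + (1 + Q 1), by positivity, fun w hw => ?_⟩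
  rcases le_total w 1 with h | h
  · have h1 : |besselSeries κ w| ≤ M := hM w ⟨hw, h⟩
    nlinarith
  · have h1 : Q w ≤ Q 1 := hanti self_mem_Ici h h
    have hw0 : 0 < w := by linarith
    have h2 : besselSeries κ w ^ 2 / w ≤ Q 1 := le_trans (le_add_of_nonneg_left (by positivity)) h1
    rw [div_le_iff₀ hw0] at h2
    have h3 : |besselSeries κ w| ≤ (1 + Q 1) * (1 + w) := by
      refine abs_le_of_sq_le_sq (h2.trans ?_) (by positivity)
      have h4 : Q 1 * w ≤ (1 + Q 1) * (1 + w) := by nlinarith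
      have h5 : 1 ≤ (1 + Q 1) * (1 + w) := by nlinarith [mul_nonneg hQ1 hw]
      nlinarith
    nlinarith

/-- The Bessel function of the first kind in terms of `besselSeries`. -/
theorem besselJ_eq {κ : ℝ} {z : ℝ} (hz : 0 < z) :
    ((z ^ (1 - κ) : ℝ) : ℂ) * besselJ ((κ - 1 : ℝ) : ℂ) z =
      ((2 ^ (1 - κ) * besselSeries κ ((z / 2) ^ 2) : ℝ) : ℂ) := by
  have hterm : ∀ k : ℕ, ((-1 : ℂ) ^ k / (Complex.Gamma (k + 1) *
      Complex.Gamma (((κ - 1 : ℝ) : ℂ) + k + 1))) *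
        ((z : ℂ) / 2) ^ (2 * (k : ℂ) + ((κ - 1 : ℝ) : ℂ)) =
      (((z / 2) ^ (κ - 1) * ((-((z / 2) ^ 2)) ^ k / (k.factorial * Real.Gamma (κ + k))) : ℝ) : ℂ) := by
    intro k
    have h1 : (((κ - 1 : ℝ) : ℂ) + k + 1) = ((κ + k : ℝ) : ℂ) := by push_cast; ring
    have h2 : ((z : ℂ) / 2) ^ (2 * (k : ℂ) + ((κ - 1 : ℝ) : ℂ)) =
        ((((z / 2) ^ 2) ^ k * (z / 2) ^ (κ - 1) : ℝ) : ℂ) := by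
      have h3 : (2 * (k : ℂ) + ((κ - 1 : ℝ) : ℂ)) = (((2 * k : ℕ) : ℝ) + (κ - 1) : ℝ) := by
        push_cast; ring
      have h4 : ((z : ℂ) / 2) = ((z / 2 : ℝ) : ℂ) := by push_cast; ring
      rw [h3, h4, ← Complex.ofReal_cpow (by positivity), Real.rpow_add (by positivity),
        Real.rpow_natCast, pow_mul]
    rw [h1, h2, Complex.Gamma_nat_eq_factorial, Complex.Gamma_ofReal, neg_pow ((z / 2) ^ 2)]
    push_cast
    ring
  unfold besselJ besselSeries
  simp_rw [hterm]
  rw [← Complex.ofReal_tsum, tsum_mul_left, ← Complex.ofReal_mul, ← mul_assoc]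
  congr 2
  have hz2 : (2 : ℝ) ^ (1 - κ) = ((1 / 2 : ℝ)) ^ (κ - 1) := by
    rw [one_div, Real.inv_rpow (by norm_num), ← Real.rpow_neg (by norm_num)]
    congr 1; ring
  rw [Real.div_rpow hz.le (by norm_num), ← mul_div_assoc, ← Real.rpow_add hz, hz2, one_div,
    Real.inv_rpow (by norm_num)]
  simp

theorem eLpNorm_two_eq_ofReal_integral {α : Type*} [MeasurableSpace α] {μ : Measure α}
    {f : α → ℂ} (hf : MemLp f 2 μ) :
    eLpNorm f 2 μ = ENNReal.ofReal ((∫ x, ‖f x‖ ^ 2 ∂μ) ^ (2⁻¹ : ℝ)) := by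
  rw [hf.eLpNorm_eq_integral_rpow_norm two_ne_zero ENNReal.ofNat_ne_top]
  simp

theorem integral_norm_sq_eq_of_eLpNorm_eq {α : Type*} [MeasurableSpace α] {μ : Measure α}
    {f g : α → ℂ} (hf : AEStronglyMeasurable f μ) (hg : MemLp g 2 μ)
    (h : eLpNorm f 2 μ = eLpNorm g 2 μ) :
    ∫ x, ‖f x‖ ^ 2 ∂μ = ∫ x, ‖g x‖ ^ 2 ∂μ := by
  have hf2 : MemLp f 2 μ := ⟨hf, h ▸ hg.2⟩
  rw [eLpNorm_two_eq_ofReal_integral hf2, eLpNorm_two_eq_ofReal_integral hg,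
    ENNReal.ofReal_eq_ofReal_iff (by positivity) (by positivity)] at h
  exact (Real.rpow_left_inj (by positivity) (by positivity) (by norm_num)).1 h

/-- If `G n → F` almost everywhere, `g n → f` in `L²` and `g n ↦ G n` preserves `L²` norms and
distances, then `F` and `f` have the same `L²` norm. -/
theorem eLpNorm_eq_of_isometric_approx {α : Type*} [MeasurableSpace α] {μ : Measure α}
    {f F : α → ℂ} {g G : ℕ → α → ℂ} (hf : AEStronglyMeasurable f μ)
    (hg : ∀ n, AEStronglyMeasurable (g n) μ) (hG : ∀ n, AEStronglyMeasurable (G n) μ)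
    (hnorm : ∀ n, eLpNorm (G n) 2 μ = eLpNorm (g n) 2 μ)
    (hdist : ∀ m n, eLpNorm (G m - G n) 2 μ = eLpNorm (g m - g n) 2 μ)
    (hlim : ∀ᵐ x ∂μ, Tendsto (fun n => G n x) atTop (nhds (F x)))
    (hconv : Tendsto (fun n => eLpNorm (g n - f) 2 μ) atTop (nhds 0)) :
    eLpNorm F 2 μ = eLpNorm f 2 μ := by
  have hF : AEStronglyMeasurable F μ := aestronglyMeasurable_of_tendsto_ae atTop hG hlim
  have htri : ∀ {u v : α → ℂ}, AEStronglyMeasurable u μ → AEStronglyMeasurable v μ →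
      eLpNorm u 2 μ ≤ eLpNorm (u - v) 2 μ + eLpNorm v 2 μ := by
    intro u v hu hv
    simpa using eLpNorm_add_le (hu.sub hv) hv (p := 2) one_le_two
  have hFG : ∀ n, eLpNorm (F - G n) 2 μ ≤ eLpNorm (g n - f) 2 μ := by
    intro n
    have h1 : eLpNorm (F - G n) 2 μ ≤ liminf (fun m => eLpNorm (G m - G n) 2 μ) atTop := by
      refine Lp.eLpNorm_lim_le_liminf_eLpNorm (fun m => (hG m).sub (hG n)) _ ?_
      filter_upwards [hlim] with x hx
      exact hx.sub_const _
    have h2 : Tendsto (fun m => eLpNorm (g m - f) 2 μ + eLpNorm (g n - f) 2 μ) atTop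
        (nhds (eLpNorm (g n - f) 2 μ)) := by
      simpa using hconv.add_const (eLpNorm (g n - f) 2 μ)
    rw [← h2.liminf_eq]
    refine h1.trans (liminf_le_liminf (Eventually.of_forall fun m => ?_))
    rw [hdist]
    have := eLpNorm_sub_le ((hg m).sub hf) ((hg n).sub hf) (p := 2) one_le_two
    simpa using this
  have h2 : Tendsto (fun n => eLpNorm (g n - f) 2 μ + eLpNorm (g n - f) 2 μ) atTop (nhds 0) := by
    simpa using hconv.add hconv
  apply le_antisymm
  · refine ge_of_tendsto' (by simpa using h2.add_const (eLpNorm f 2 μ)) fun n => ?_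
    calc eLpNorm F 2 μ ≤ eLpNorm (F - G n) 2 μ + eLpNorm (G n) 2 μ := htri hF (hG n)
      _ ≤ eLpNorm (g n - f) 2 μ + (eLpNorm (g n - f) 2 μ + eLpNorm f 2 μ) := by
        rw [hnorm]
        exact add_le_add (hFG n) (htri (hg n) hf)
      _ = _ := (add_assoc _ _ _).symm
  · refine ge_of_tendsto' (by simpa using h2.add_const (eLpNorm F 2 μ)) fun n => ?_
    calc eLpNorm f 2 μ ≤ eLpNorm (g n - f) 2 μ + eLpNorm (g n) 2 μ := by
          rw [eLpNorm_sub_comm]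
          exact htri hf (hg n)
      _ ≤ eLpNorm (g n - f) 2 μ + (eLpNorm (g n - f) 2 μ + eLpNorm F 2 μ) := by
        rw [← hnorm n]
        refine add_le_add le_rfl ((htri (hG n) hF).trans (add_le_add ?_ le_rfl))
        rw [eLpNorm_sub_comm]
        exact hFG n
      _ = _ := (add_assoc _ _ _).symm

theorem integral_norm_sq_linearCombination {α ι : Type*} [MeasurableSpace α] {μ : Measure α}
    {u : ι → α → ℝ} (hu : ∀ i j, Integrable (fun x => u i x * u j x) μ) (c : ι →₀ ℂ) :
    ((∫ x, ‖Finsupp.linearCombination ℂ (fun i x => (u i x : ℂ)) c x‖ ^ 2 ∂μ : ℝ) : ℂ) =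
      ∑ i ∈ c.support, ∑ j ∈ c.support,
        c i * (starRingEnd ℂ) (c j) * ((∫ x, u i x * u j x ∂μ : ℝ) : ℂ) := by
  have hexp : ∀ x, ((‖Finsupp.linearCombination ℂ (fun i x => (u i x : ℂ)) c x‖ ^ 2 : ℝ) : ℂ) =
      ∑ i ∈ c.support, ∑ j ∈ c.support,
        c i * (starRingEnd ℂ) (c j) * ((u i x * u j x : ℝ) : ℂ) := by
    intro x
    rw [Complex.ofReal_pow, ← Complex.mul_conj', Finsupp.linearCombination_apply, Finsupp.sum,
      Finset.sum_apply, map_sum, Finset.sum_mul_sum]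
    refine Finset.sum_congr rfl fun i _ => Finset.sum_congr rfl fun j _ => ?_
    simp only [Pi.smul_apply, smul_eq_mul, map_mul, Complex.conj_ofReal, Complex.ofReal_mul]
    ring
  have hinteg : ∀ i j, Integrable
      (fun x => c i * (starRingEnd ℂ) (c j) * ((u i x * u j x : ℝ) : ℂ)) μ :=
    fun i j => (hu i j).ofReal.const_mul _
  rw [← integral_complex_ofReal]
  simp_rw [hexp]
  rw [integral_finsetSum _ fun i _ => integrable_finsetSum _ fun j _ => hinteg i j]
  refine Finset.sum_congr rfl fun i _ => ?_
  rw [integral_finsetSum _ fun j _ => hinteg i j]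
  refine Finset.sum_congr rfl fun j _ => ?_
  rw [integral_const_mul, integral_complex_ofReal]

theorem memLp_linearCombination {α ι : Type*} [MeasurableSpace α] {μ : Measure α}
    {u : ι → α → ℝ} (hm : ∀ i, AEStronglyMeasurable (u i) μ)
    (hu : ∀ i j, Integrable (fun x => u i x * u j x) μ) (c : ι →₀ ℂ) :
    MemLp (Finsupp.linearCombination ℂ (fun i x => (u i x : ℂ)) c) 2 μ := by
  rw [Finsupp.linearCombination_apply, Finsupp.sum]
  refine memLp_finsetSum' _ fun i _ => MemLp.const_smul ?_ _
  refine MemLp.ofReal ((memLp_two_iff_integrable_sq (hm i)).2 ?_)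
  simpa [sq] using hu i i

/-- Two families with the same Gram matrix have linear combinations of the same `L²` norm. -/
theorem eLpNorm_linearCombination_eq {α ι : Type*} [MeasurableSpace α] {μ : Measure α}
    {u v : ι → α → ℝ} (hum : ∀ i, AEStronglyMeasurable (u i) μ)
    (hvm : ∀ i, AEStronglyMeasurable (v i) μ)
    (hu : ∀ i j, Integrable (fun x => u i x * u j x) μ)
    (hv : ∀ i j, Integrable (fun x => v i x * v j x) μ)
    (huv : ∀ i j, ∫ x, u i x * u j x ∂μ = ∫ x, v i x * v j x ∂μ) (c : ι →₀ ℂ) :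
    eLpNorm (Finsupp.linearCombination ℂ (fun i x => (u i x : ℂ)) c) 2 μ =
      eLpNorm (Finsupp.linearCombination ℂ (fun i x => (v i x : ℂ)) c) 2 μ := by
  rw [eLpNorm_two_eq_ofReal_integral (memLp_linearCombination hum hu c),
    eLpNorm_two_eq_ofReal_integral (memLp_linearCombination hvm hv c)]
  congr 2
  apply Complex.ofReal_injective
  rw [integral_norm_sq_linearCombination hu, integral_norm_sq_linearCombination hv]
  simp_rw [huv]

/-- The measure `x ^ a dx` on the half-line. -/
noncomputable def powerMeasure (a : ℝ) : Measure ℝ :=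
  (volume.restrict (Ioi 0)).withDensity fun x => ENNReal.ofReal (x ^ a)

theorem measurable_ofReal_rpow (a : ℝ) : Measurable fun x : ℝ => ENNReal.ofReal (x ^ a) := by
  fun_prop

theorem integral_powerMeasure {E : Type*} [NormedAddCommGroup E] [NormedSpace ℝ E] (a : ℝ)
    (f : ℝ → E) : ∫ x, f x ∂powerMeasure a = ∫ x in Ioi (0 : ℝ), x ^ a • f x := by
  rw [powerMeasure, integral_withDensity_eq_integral_toReal_smul (measurable_ofReal_rpow a)
    (ae_of_all _ fun _ => ENNReal.ofReal_lt_top)]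
  refine setIntegral_congr_fun measurableSet_Ioi fun x hx => ?_
  simp only [ENNReal.toReal_ofReal (Real.rpow_nonneg (le_of_lt hx) a)]

theorem integrable_powerMeasure_iff {E : Type*} [NormedAddCommGroup E] [NormedSpace ℝ E]
    (a : ℝ) (f : ℝ → E) :
    Integrable f (powerMeasure a) ↔ IntegrableOn (fun x => x ^ a • f x) (Ioi 0) := by
  rw [powerMeasure, integrable_withDensity_iff_integrable_smul' (measurable_ofReal_rpow a)
    (ae_of_all _ fun _ => ENNReal.ofReal_lt_top)]
  refine integrableOn_congr_fun (fun x hx => ?_) measurableSet_Ioi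
  simp only [ENNReal.toReal_ofReal (Real.rpow_nonneg (le_of_lt hx) a)]

theorem ae_powerMeasure_pos (a : ℝ) : ∀ᵐ x ∂powerMeasure a, 0 < x :=
  (withDensity_absolutelyContinuous _ _).ae_le (ae_restrict_mem measurableSet_Ioi)

theorem aestronglyMeasurable_powerMeasure {a : ℝ} {f : ℝ → ℂ} (hf : ContinuousOn f (Ioi 0)) :
    AEStronglyMeasurable f (powerMeasure a) :=
  (hf.aestronglyMeasurable measurableSet_Ioi).mono_ac (withDensity_absolutelyContinuous _ _)

theorem rpow_mul_pow_mul_gauss {a s x : ℝ} (hx : 0 < x) (k : ℕ) :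
    x ^ a • ((x ^ 2) ^ k * Real.exp (-s * x ^ 2)) =
      x ^ (a + 2 * k) * Real.exp (-s * x ^ (2 : ℝ)) := by
  have h : ((2 * k : ℕ) : ℝ) = 2 * k := by push_cast; ring
  rw [smul_eq_mul, ← mul_assoc, ← pow_mul, ← Real.rpow_natCast x (2 * k), ← Real.rpow_add hx, h,
    Real.rpow_two]

theorem integrable_pow_mul_gauss {a s : ℝ} (ha : -1 < a) (hs : 0 < s) (k : ℕ) :
    Integrable (fun x => (x ^ 2) ^ k * Real.exp (-s * x ^ 2)) (powerMeasure a) := by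
  rw [integrable_powerMeasure_iff]
  have h0 : (0 : ℝ) ≤ k := k.cast_nonneg
  refine (integrableOn_congr_fun (fun x hx => rpow_mul_pow_mul_gauss hx k) measurableSet_Ioi).2 ?_
  exact integrableOn_rpow_mul_exp_neg_mul_rpow (by linarith) two_pos hs

theorem integral_pow_mul_gauss {a s : ℝ} (ha : -1 < a) (hs : 0 < s) (k : ℕ) :
    ∫ x, (x ^ 2) ^ k * Real.exp (-s * x ^ 2) ∂powerMeasure a =
      2⁻¹ * s ^ (-((a + 1) / 2)) * (s⁻¹ ^ k * Real.Gamma ((a + 1) / 2 + k)) := by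
  have h0 : (0 : ℝ) ≤ k := k.cast_nonneg
  rw [integral_powerMeasure,
    setIntegral_congr_fun measurableSet_Ioi fun x hx => rpow_mul_pow_mul_gauss hx k,
    integral_rpow_mul_exp_neg_mul_rpow two_pos (by linarith) hs]
  have h1 : -(a + 2 * k + 1) / 2 = -((a + 1) / 2) + -(k : ℝ) := by ring
  have h2 : (a + 2 * k + 1) / 2 = (a + 1) / 2 + k := by ring
  rw [h1, h2, Real.rpow_add hs, Real.rpow_neg hs.le (k : ℝ), Real.rpow_natCast, inv_pow]
  ring

theorem integrable_gauss {a s : ℝ} (ha : -1 < a) (hs : 0 < s) :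
    Integrable (fun x => Real.exp (-s * x ^ 2)) (powerMeasure a) := by
  simpa using integrable_pow_mul_gauss ha hs 0

theorem integral_gauss_powerMeasure {a s : ℝ} (ha : -1 < a) (hs : 0 < s) :
    ∫ x, Real.exp (-s * x ^ 2) ∂powerMeasure a =
      2⁻¹ * s ^ (-((a + 1) / 2)) * Real.Gamma ((a + 1) / 2) := by
  simpa using integral_pow_mul_gauss ha hs 0

theorem integral_besselSeries_mul_gauss {a s : ℝ} (ha : -1 < a) (hs : 0 < s) (β : ℝ) :
    ∫ y, besselSeries ((a + 1) / 2) (β * y ^ 2) * Real.exp (-s * y ^ 2) ∂powerMeasure a =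
      2⁻¹ * s ^ (-((a + 1) / 2)) * Real.exp (-(β / s)) := by
  set κ := (a + 1) / 2 with hκ
  have hκ0 : 0 < κ := by linarith
  let F : ℕ → ℝ → ℝ := fun k y =>
    (-β) ^ k / (k.factorial * Real.Gamma (κ + k)) * ((y ^ 2) ^ k * Real.exp (-s * y ^ 2))
  have hF : ∀ k, Integrable (F k) (powerMeasure a) :=
    fun k => (integrable_pow_mul_gauss ha hs k).const_mul _
  have hFn : ∀ k, ∫ y, ‖F k y‖ ∂powerMeasure a =
      2⁻¹ * s ^ (-κ) * ((|β| / s) ^ k / k.factorial) := by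
    intro k
    have hG := Gamma_add_nat_pos hκ0 k
    have : ∀ y, ‖F k y‖ = |β| ^ k / (k.factorial * Real.Gamma (κ + k)) *
        ((y ^ 2) ^ k * Real.exp (-s * y ^ 2)) := by
      intro y
      rw [norm_mul, norm_div, norm_pow, norm_neg, Real.norm_eq_abs β,
        Real.norm_of_nonneg (show (0 : ℝ) ≤ k.factorial * Real.Gamma (κ + k) by positivity),
        Real.norm_of_nonneg (show (0 : ℝ) ≤ (y ^ 2) ^ k * Real.exp (-s * y ^ 2) by positivity)]
    simp_rw [this]
    rw [integral_const_mul, integral_pow_mul_gauss ha hs, ← hκ, div_pow, inv_pow]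
    field_simp
  have hFi : ∀ k, ∫ y, F k y ∂powerMeasure a =
      2⁻¹ * s ^ (-κ) * ((-(β / s)) ^ k / k.factorial) := by
    intro k
    have hG := Gamma_add_nat_pos hκ0 k
    simp only [F]
    rw [integral_const_mul, integral_pow_mul_gauss ha hs, ← hκ, ← neg_div s β, div_pow, inv_pow]
    field_simp
  have hsum : Summable fun k => ∫ y, ‖F k y‖ ∂powerMeasure a := by
    simp_rw [hFn]
    exact (Real.summable_pow_div_factorial _).mul_left _
  have key := hasSum_integral_of_summable_integral_norm hF hsum
  simp_rw [hFi] at key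
  have hexp : HasSum (fun k : ℕ => 2⁻¹ * s ^ (-κ) * ((-(β / s)) ^ k / k.factorial))
      (2⁻¹ * s ^ (-κ) * Real.exp (-(β / s))) := by
    rw [Real.exp_eq_exp_ℝ]
    exact (NormedSpace.expSeries_div_hasSum_exp (-(β / s))).mul_left _
  rw [← key.unique hexp]
  congr 1
  funext y
  rw [besselSeries, ← tsum_mul_right]
  refine tsum_congr fun k => ?_
  simp only [F]
  rw [← neg_mul, mul_pow]
  ring

/-- Faster than polynomial decay on the half-line. -/
def RapidDecay (h : ℝ → ℝ) : Prop :=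
  ∀ m : ℕ, ∃ C : ℝ, ∀ y > 0, y ^ m * |h y| ≤ C

theorem RapidDecay.add {f g : ℝ → ℝ} (hf : RapidDecay f) (hg : RapidDecay g) :
    RapidDecay fun y => f y + g y := by
  intro m
  obtain ⟨A, hA⟩ := hf m
  obtain ⟨B, hB⟩ := hg m
  refine ⟨A + B, fun y hy => ?_⟩
  calc y ^ m * |f y + g y| ≤ y ^ m * (|f y| + |g y|) := by
        gcongr
        exact abs_add_le _ _
    _ ≤ A + B := by rw [mul_add]; exact add_le_add (hA y hy) (hB y hy)

theorem RapidDecay.mul {f g : ℝ → ℝ} (hf : RapidDecay f) (hg : RapidDecay g) :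
    RapidDecay fun y => f y * g y := by
  intro m
  obtain ⟨A, hA⟩ := hf m
  obtain ⟨B, hB⟩ := hg 0
  refine ⟨A * B, fun y hy => ?_⟩
  have hB' : |g y| ≤ B := by simpa using hB y hy
  rw [abs_mul, ← mul_assoc]
  exact mul_le_mul (hA y hy) hB' (abs_nonneg _) (le_trans (by positivity) (hA y hy))

theorem RapidDecay.const_mul_pow_mul {f : ℝ → ℝ} (hf : RapidDecay f) (c : ℝ) (n : ℕ) :
    RapidDecay fun y => c * y ^ n * f y := by
  intro m
  obtain ⟨A, hA⟩ := hf (m + n)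
  refine ⟨|c| * A, fun y hy => ?_⟩
  rw [abs_mul, abs_mul, abs_of_nonneg (show 0 ≤ y ^ n by positivity)]
  calc y ^ m * (|c| * y ^ n * |f y|) = |c| * (y ^ (m + n) * |f y|) := by ring
    _ ≤ |c| * A := by
      gcongr
      exact hA y hy

theorem rapidDecay_gauss : RapidDecay fun y => Real.exp (-y ^ 2) := by
  intro m
  refine ⟨1 + m.factorial, fun y hy => ?_⟩
  have h1 : y ^ m ≤ 1 + (y ^ 2) ^ m := by
    rcases le_total y 1 with h | h
    · linarith [pow_le_one₀ hy.le h (n := m), show 0 ≤ (y ^ 2) ^ m by positivity]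
    · have : y ≤ y ^ 2 := by nlinarith
      linarith [pow_le_pow_left₀ hy.le this m]
  have h2 := Real.pow_div_factorial_le_exp (y ^ 2) (by positivity) m
  rw [div_le_iff₀ (by positivity)] at h2
  have h3 : 1 ≤ Real.exp (y ^ 2) := Real.one_le_exp (by positivity)
  rw [abs_of_pos (Real.exp_pos _), Real.exp_neg, ← div_eq_mul_inv, div_le_iff₀ (Real.exp_pos _)]
  linarith

theorem RapidDecay.integrable {a : ℝ} (ha : -1 < a) {h : ℝ → ℝ} (hd : RapidDecay h)
    (hc : ContinuousOn h (Ioi 0)) : Integrable h (powerMeasure a) := by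
  rw [integrable_powerMeasure_iff]
  obtain ⟨m, hm⟩ := exists_nat_gt (a + 1)
  obtain ⟨A, hA⟩ := hd m
  obtain ⟨B, hB⟩ := hd 0
  have := mellin_convergent_of_isBigO_scalar (a := m) (b := 0) (s := a + 1)
    (hc.locallyIntegrableOn measurableSet_Ioi) ?_ hm ?_ (by linarith)
  · simpa using this
  · refine Asymptotics.IsBigO.of_bound A ?_
    filter_upwards [eventually_gt_atTop 0] with y hy
    have := hA y hy
    rw [Real.norm_eq_abs, Real.norm_of_nonneg (by positivity), Real.rpow_neg hy.le,
      Real.rpow_natCast, ← div_eq_mul_inv, le_div_iff₀ (by positivity)]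
    linarith
  · refine Asymptotics.IsBigO.of_bound B ?_
    filter_upwards [self_mem_nhdsWithin] with y hy
    simpa using hB y hy

/-- The kernel `b^κ (bxy)^(1-κ) J_(κ-1)(bxy)`, `κ = (a + 1) / 2`, of the Hankel transform. -/
noncomputable def hankelKernel (a b x y : ℝ) : ℝ :=
  b ^ ((a + 1) / 2) * 2 ^ (1 - (a + 1) / 2) *
    besselSeries ((a + 1) / 2) ((b * x / 2) ^ 2 * y ^ 2)

/-- The dilated Hankel transform of `L²(x ^ a dx)`. -/
noncomputable def hankelTransform (a b : ℝ) (f : ℝ → ℂ) (x : ℝ) : ℂ :=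
  ∫ y, (hankelKernel a b x y : ℂ) * f y ∂powerMeasure a

theorem continuous_hankelKernel {a : ℝ} (ha : -1 < a) (b x : ℝ) :
    Continuous (hankelKernel a b x) := by
  have := continuous_besselSeries (κ := (a + 1) / 2) (by linarith)
  unfold hankelKernel
  fun_prop

theorem hankelKernel_growth {a : ℝ} (ha : -1 < a) (b x : ℝ) :
    ∃ A B : ℝ, ∀ y, |hankelKernel a b x y| ≤ A + B * y ^ 2 := by
  obtain ⟨C, hC0, hC⟩ := besselSeries_growth (κ := (a + 1) / 2) (by linarith)
  set N := |b ^ ((a + 1) / 2) * 2 ^ (1 - (a + 1) / 2)|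
  refine ⟨N * C, N * C * (b * x / 2) ^ 2, fun y => ?_⟩
  rw [hankelKernel, abs_mul]
  calc _ ≤ N * (C * (1 + (b * x / 2) ^ 2 * y ^ 2)) := by
        gcongr
        exact hC _ (by positivity)
    _ = _ := by ring

/-- The Gaussian `exp (-(k + 1) y²)`. -/
noncomputable def gauss (k : ℕ) (y : ℝ) : ℝ :=
  Real.exp (-(k + 1 : ℝ) * y ^ 2)

/-- The Hankel transform of `gauss k`. -/
noncomputable def gaussHankel (a b : ℝ) (k : ℕ) (x : ℝ) : ℝ :=
  (b / (2 * (k + 1))) ^ ((a + 1) / 2) * Real.exp (-(b ^ 2 / (4 * (k + 1))) * x ^ 2)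

theorem integral_hankelKernel_mul_gauss {a b : ℝ} (ha : -1 < a) (hb : 0 < b) (k : ℕ) (x : ℝ) :
    ∫ y, hankelKernel a b x y * gauss k y ∂powerMeasure a = gaussHankel a b k x := by
  have hk : (0 : ℝ) < k + 1 := by positivity
  simp only [hankelKernel, gauss, mul_assoc]
  rw [integral_const_mul, integral_const_mul, integral_besselSeries_mul_gauss ha hk, gaussHankel,
    Real.div_rpow hb.le (by positivity), Real.mul_rpow zero_le_two hk.le, Real.rpow_neg hk.le,
    Real.rpow_sub two_pos, Real.rpow_one]
  have h1 : -((b * x / 2) ^ 2 / (k + 1 : ℝ)) = -(b ^ 2 / (4 * (k + 1))) * x ^ 2 := by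
    field_simp
    ring
  rw [h1]
  field_simp

theorem gauss_mul_gauss (i j : ℕ) (y : ℝ) :
    gauss i y * gauss j y = Real.exp (-(i + j + 2 : ℝ) * y ^ 2) := by
  rw [gauss, gauss, ← Real.exp_add]
  ring_nf

theorem gaussHankel_mul_gaussHankel (a b : ℝ) (i j : ℕ) (x : ℝ) :
    gaussHankel a b i x * gaussHankel a b j x =
      (b / (2 * (i + 1))) ^ ((a + 1) / 2) * (b / (2 * (j + 1))) ^ ((a + 1) / 2) *
        Real.exp (-(b ^ 2 / (4 * (i + 1)) + b ^ 2 / (4 * (j + 1))) * x ^ 2) := by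
  rw [gaussHankel, gaussHankel, neg_add, add_mul, Real.exp_add]
  ring

theorem integrable_gauss_mul_gauss {a : ℝ} (ha : -1 < a) (i j : ℕ) :
    Integrable (fun y => gauss i y * gauss j y) (powerMeasure a) := by
  simp_rw [gauss_mul_gauss]
  exact integrable_gauss ha (by positivity)

theorem integrable_gaussHankel_mul_gaussHankel {a b : ℝ} (ha : -1 < a) (hb : 0 < b) (i j : ℕ) :
    Integrable (fun x => gaussHankel a b i x * gaussHankel a b j x) (powerMeasure a) := by
  simp_rw [gaussHankel_mul_gaussHankel]
  exact (integrable_gauss ha (by positivity)).const_mul _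

theorem integral_gaussHankel_mul_gaussHankel {a b : ℝ} (ha : -1 < a) (hb : 0 < b) (i j : ℕ) :
    ∫ x, gaussHankel a b i x * gaussHankel a b j x ∂powerMeasure a =
      ∫ y, gauss i y * gauss j y ∂powerMeasure a := by
  simp_rw [gaussHankel_mul_gaussHankel, gauss_mul_gauss]
  have hi : (0 : ℝ) < i + 1 := by positivity
  have hj : (0 : ℝ) < j + 1 := by positivity
  rw [integral_const_mul, integral_gauss_powerMeasure ha (by positivity),
    integral_gauss_powerMeasure ha (by positivity), ← Real.mul_rpow (by positivity) (by positivity),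
    Real.rpow_neg (by positivity), Real.rpow_neg (by positivity)]
  have h : b / (2 * (i + 1 : ℝ)) * (b / (2 * (j + 1))) =
      (b ^ 2 / (4 * (i + 1)) + b ^ 2 / (4 * (j + 1))) * (i + j + 2 : ℝ)⁻¹ := by
    field_simp
    ring
  rw [h, Real.mul_rpow (by positivity) (by positivity), Real.inv_rpow (by positivity)]
  have : (b ^ 2 / (4 * (i + 1)) + b ^ 2 / (4 * (j + 1)) : ℝ) ^ ((a + 1) / 2) ≠ 0 := by positivity
  field_simp

theorem continuous_gauss (k : ℕ) : Continuous (gauss k) := by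
  unfold gauss
  fun_prop

theorem continuous_gaussHankel (a b : ℝ) (k : ℕ) : Continuous (gaussHankel a b k) := by
  unfold gaussHankel
  fun_prop

theorem integrable_hankelKernel_mul {a b : ℝ} (ha : -1 < a) (x : ℝ) {f : ℝ → ℂ}
    (hc : ContinuousOn f (Ioi 0)) (hd : RapidDecay fun y => ‖f y‖) :
    Integrable (fun y => (hankelKernel a b x y : ℂ) * f y) (powerMeasure a) := by
  obtain ⟨A, B, hAB⟩ := hankelKernel_growth ha b x
  have hdom : RapidDecay fun y => A * y ^ 0 * ‖f y‖ + B * y ^ 2 * ‖f y‖ :=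
    (hd.const_mul_pow_mul A 0).add (hd.const_mul_pow_mul B 2)
  have hK := continuous_hankelKernel ha b x
  refine (hdom.integrable ha (by fun_prop)).mono'
    (aestronglyMeasurable_powerMeasure (by fun_prop)) (ae_of_all _ fun y => ?_)
  rw [norm_mul, Complex.norm_real, Real.norm_eq_abs]
  calc _ ≤ (A + B * y ^ 2) * ‖f y‖ := by gcongr; exact hAB y
    _ = _ := by ring

theorem rapidDecay_norm_gauss (k : ℕ) : RapidDecay fun y => ‖(gauss k y : ℂ)‖ := by
  intro m
  obtain ⟨C, hC⟩ := rapidDecay_gauss m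
  refine ⟨C, fun y hy => le_trans ?_ (hC y hy)⟩
  rw [abs_norm, Complex.norm_real, Real.norm_eq_abs, gauss, Real.abs_exp, Real.abs_exp]
  gcongr
  have : (0 : ℝ) ≤ k := k.cast_nonneg
  nlinarith [sq_nonneg y, mul_nonneg this (sq_nonneg y)]

theorem hankelTransform_linearCombination {a b : ℝ} (ha : -1 < a) (hb : 0 < b) (c : ℕ →₀ ℂ) :
    hankelTransform a b (Finsupp.linearCombination ℂ (fun k y => (gauss k y : ℂ)) c) =
      Finsupp.linearCombination ℂ (fun k x => (gaussHankel a b k x : ℂ)) c := by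
  funext x
  simp only [hankelTransform, Finsupp.linearCombination_apply, Finsupp.sum, Finset.sum_apply,
    Pi.smul_apply, smul_eq_mul, Finset.mul_sum, mul_left_comm _ (c _)]
  have hinteg : ∀ k, Integrable (fun y => (hankelKernel a b x y : ℂ) * (gauss k y : ℂ))
      (powerMeasure a) := fun k =>
    have := continuous_gauss k
    integrable_hankelKernel_mul ha x (by fun_prop) (rapidDecay_norm_gauss k)
  rw [integral_finsetSum _ fun k _ => (hinteg k).const_mul _]
  refine Finset.sum_congr rfl fun k _ => ?_
  rw [integral_const_mul, ← integral_hankelKernel_mul_gauss ha hb k x, ← integral_complex_ofReal]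
  simp only [Complex.ofReal_mul]

/-- The profile `u ↦ χ(u) f(√(-log u)) / u` on `[0, 1]`, with the cutoff
`χ(u) = min 1 (max 0 (n u (1 - u) - 1))`. -/
noncomputable def cutoffProfile (f : ℝ → ℂ) (n : ℕ) (u : ℝ) : ℂ :=
  ((min 1 (max 0 (n * (u * (1 - u)) - 1)) / u : ℝ) : ℂ) * f (√(-Real.log u))

theorem continuousOn_cutoffProfile {f : ℝ → ℂ} (hf : ContinuousOn f (Ioi 0)) (n : ℕ) :
    ContinuousOn (cutoffProfile f n) (Icc 0 1) := by
  intro u hu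
  apply ContinuousAt.continuousWithinAt
  by_cases h : (n : ℝ) * (u * (1 - u)) < 1
  · have hev : ∀ᶠ v in nhds u, (n : ℝ) * (v * (1 - v)) < 1 :=
      (show Continuous fun v : ℝ => (n : ℝ) * (v * (1 - v)) by fun_prop).continuousAt.eventually_lt
        continuousAt_const h
    refine (continuousAt_const (y := (0 : ℂ))).congr ?_
    filter_upwards [hev] with v hv
    rw [cutoffProfile, max_eq_left (by linarith), min_eq_right zero_le_one]
    simp
  · have hpos : 0 < u * (1 - u) := by
      by_contra hneg
      have : (n : ℝ) * (u * (1 - u)) ≤ 0 :=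
        mul_nonpos_of_nonneg_of_nonpos n.cast_nonneg (not_lt.1 hneg)
      linarith
    have hu0 : u ≠ 0 := by rintro rfl; simp at hpos
    have hu1 : u ≠ 1 := by rintro rfl; simp at hpos
    have hlog : Real.log u < 0 := Real.log_neg (lt_of_le_of_ne hu.1 hu0.symm)
      (lt_of_le_of_ne hu.2 hu1)
    have hfc : ContinuousAt f (√(-Real.log u)) :=
      hf.continuousAt (Ioi_mem_nhds (Real.sqrt_pos.2 (by linarith)))
    have hcomp : ContinuousAt (fun v => f (√(-Real.log v))) u :=
      ContinuousAt.comp (f := fun v => √(-Real.log v)) hfc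
        (Real.continuousAt_log hu0).neg.sqrt
    refine ContinuousAt.mul (Complex.continuous_ofReal.continuousAt.comp ?_) hcomp
    exact ContinuousAt.div (by fun_prop) continuousAt_id hu0

theorem exists_complex_polynomial_near {F : ℝ → ℂ} (hF : ContinuousOn F (Icc 0 1)) {ε : ℝ}
    (hε : 0 < ε) :
    ∃ P : Polynomial ℂ, ∀ u ∈ Icc (0 : ℝ) 1, ‖P.eval (u : ℂ) - F u‖ ≤ ε := by
  obtain ⟨p, hp⟩ := exists_polynomial_near_of_continuousOn 0 1 (fun u => (F u).re)
    (Complex.continuous_re.comp_continuousOn hF) (ε / 2) (by linarith)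
  obtain ⟨q, hq⟩ := exists_polynomial_near_of_continuousOn 0 1 (fun u => (F u).im)
    (Complex.continuous_im.comp_continuousOn hF) (ε / 2) (by linarith)
  refine ⟨p.map Complex.ofRealHom + Polynomial.C Complex.I * q.map Complex.ofRealHom,
    fun u hu => ?_⟩
  have heval : ∀ r : Polynomial ℝ, (r.map Complex.ofRealHom).eval (u : ℂ) = ((r.eval u : ℝ) : ℂ) := by
    intro r
    rw [Polynomial.eval_map]
    exact Polynomial.eval₂_at_apply Complex.ofRealHom u
  refine (Complex.norm_le_abs_re_add_abs_im _).trans ?_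
  simp only [Polynomial.eval_add, Polynomial.eval_mul, Polynomial.eval_C, heval]
  have h1 := hp u hu
  have h2 := hq u hu
  simp only [Complex.sub_re, Complex.add_re, Complex.ofReal_re, Complex.mul_re, Complex.I_re,
    Complex.I_im, Complex.ofReal_im, Complex.sub_im, Complex.add_im, Complex.mul_im]
  simp only [zero_mul, mul_zero, sub_zero, add_zero, one_mul, zero_add]
  linarith

/-- Continuous functions on the half-line are pointwise limits of combinations of Gaussians, with
a uniformly dominated error. -/
theorem exists_gauss_approx {f : ℝ → ℂ} (hf : ContinuousOn f (Ioi 0)) :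
    ∃ c : ℕ → ℕ →₀ ℂ,
      (∀ y > 0, Tendsto
        (fun n => Finsupp.linearCombination ℂ (fun k y => (gauss k y : ℂ)) (c n) y) atTop
        (nhds (f y))) ∧
      ∀ n, ∀ y > 0, ‖Finsupp.linearCombination ℂ (fun k y => (gauss k y : ℂ)) (c n) y - f y‖ ≤
        ‖f y‖ + Real.exp (-y ^ 2) := by
  choose P hP using fun n : ℕ => exists_complex_polynomial_near
    (continuousOn_cutoffProfile hf n) (show (0 : ℝ) < 1 / ((n : ℝ) + 1) by positivity)
  have hlc : ∀ n y, Finsupp.linearCombination ℂ (fun k y => (gauss k y : ℂ))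
      (Finsupp.onFinset (P n).support (P n).coeff fun k hk => Polynomial.mem_support_iff.2 hk) y =
      Real.exp (-y ^ 2) * (P n).eval (Real.exp (-y ^ 2) : ℂ) := by
    intro n y
    rw [Finsupp.linearCombination_apply, Finsupp.onFinset_sum _ fun k => by exact zero_smul _ _,
      Finset.sum_apply, Polynomial.eval_eq_sum, Polynomial.sum, Finset.mul_sum]
    refine Finset.sum_congr rfl fun k _ => ?_
    have : gauss k y = Real.exp (-y ^ 2) * Real.exp (-y ^ 2) ^ k := by
      rw [gauss, ← pow_succ', ← Real.exp_nat_mul]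
      push_cast
      ring_nf
    rw [Pi.smul_apply, this, smul_eq_mul]
    push_cast
    ring
  have hχ : ∀ y > 0, ∀ n : ℕ, (Real.exp (-y ^ 2) : ℂ) * cutoffProfile f n (Real.exp (-y ^ 2)) =
      ((min 1 (max 0 (n * (Real.exp (-y ^ 2) * (1 - Real.exp (-y ^ 2))) - 1)) : ℝ) : ℂ) * f y := by
    intro y hy n
    have h1 : √(-Real.log (Real.exp (-y ^ 2))) = y := by
      rw [Real.log_exp, neg_neg, Real.sqrt_sq (le_of_lt hy)]
    rw [cutoffProfile, h1, ← mul_assoc, ← Complex.ofReal_mul,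
      mul_div_cancel₀ _ (Real.exp_pos _).ne']
  have hu : ∀ y > 0, Real.exp (-y ^ 2) ∈ Ioo (0 : ℝ) 1 := fun y hy =>
    ⟨Real.exp_pos _, Real.exp_lt_one_iff.2 (by have := pow_pos hy 2; linarith)⟩
  have herr : ∀ y > 0, ∀ n : ℕ, ‖(Real.exp (-y ^ 2) : ℂ) * (P n).eval (Real.exp (-y ^ 2) : ℂ) -
      ((min 1 (max 0 (n * (Real.exp (-y ^ 2) * (1 - Real.exp (-y ^ 2))) - 1)) : ℝ) : ℂ) * f y‖ ≤
      Real.exp (-y ^ 2) * (1 / ((n : ℝ) + 1)) := by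
    intro y hy n
    rw [← hχ y hy, ← mul_sub, norm_mul, Complex.norm_real, Real.norm_of_nonneg (Real.exp_pos _).le]
    gcongr
    exact hP n _ ⟨(hu y hy).1.le, (hu y hy).2.le⟩
  refine ⟨fun n => Finsupp.onFinset (P n).support (P n).coeff fun k hk =>
    Polynomial.mem_support_iff.2 hk, fun y hy => ?_, fun n y hy => ?_⟩
  · simp_rw [hlc]
    have hpos : 0 < Real.exp (-y ^ 2) * (1 - Real.exp (-y ^ 2)) :=
      mul_pos (hu y hy).1 (sub_pos.2 (hu y hy).2)
    have h0 : Tendsto (fun n : ℕ => Real.exp (-y ^ 2) * (1 / ((n : ℝ) + 1))) atTop (nhds 0) := by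
      simpa using tendsto_one_div_add_atTop_nhds_zero_nat.const_mul (Real.exp (-y ^ 2))
    refine tendsto_iff_norm_sub_tendsto_zero.2 (squeeze_zero' (Eventually.of_forall fun n =>
      norm_nonneg _) ?_ h0)
    have hlarge := (tendsto_natCast_atTop_atTop (R := ℝ)).atTop_mul_const hpos
    filter_upwards [hlarge.eventually_ge_atTop 2] with n hn
    have := herr y hy n
    rwa [min_eq_left (le_max_of_le_right (by linarith)), Complex.ofReal_one, one_mul] at this
  · rw [hlc]
    set χ := min 1 (max 0 (n * (Real.exp (-y ^ 2) * (1 - Real.exp (-y ^ 2))) - 1))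
    have hχ0 : 0 ≤ χ := le_min zero_le_one (le_max_left _ _)
    have hχ1 : χ ≤ 1 := min_le_left _ _
    have h1 : ‖(χ : ℂ) * f y - f y‖ ≤ ‖f y‖ := by
      have : (χ : ℂ) * f y - f y = ((χ - 1 : ℝ) : ℂ) * f y := by push_cast; ring
      rw [this, norm_mul, Complex.norm_real, Real.norm_eq_abs]
      exact mul_le_of_le_one_left (norm_nonneg _) (abs_le.2 ⟨by linarith, by linarith⟩)
    have h2 := herr y hy n
    have h3 : Real.exp (-y ^ 2) * (1 / ((n : ℝ) + 1)) ≤ Real.exp (-y ^ 2) :=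
      mul_le_of_le_one_right (Real.exp_pos _).le
        ((div_le_one (by positivity)).2 (by linarith [n.cast_nonneg (α := ℝ)]))
    have h4 := norm_sub_le_norm_sub_add_norm_sub
      ((Real.exp (-y ^ 2) : ℂ) * (P n).eval (Real.exp (-y ^ 2) : ℂ)) ((χ : ℂ) * f y) (f y)
    linarith

/-- Plancherel's theorem for the Hankel transform. -/
theorem integral_norm_sq_hankelTransform {a b : ℝ} (ha : -1 < a) (hb : 0 < b) {f : ℝ → ℂ}
    (hc : ContinuousOn f (Ioi 0)) (hd : RapidDecay fun y => ‖f y‖) :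
    ∫ x, ‖hankelTransform a b f x‖ ^ 2 ∂powerMeasure a = ∫ x, ‖f x‖ ^ 2 ∂powerMeasure a := by
  obtain ⟨c, hlim, hbound⟩ := exists_gauss_approx hc
  set μ := powerMeasure a
  set g : ℕ → ℝ → ℂ := fun n => Finsupp.linearCombination ℂ (fun k y => (gauss k y : ℂ)) (c n)
    with hg
  have hfm : AEStronglyMeasurable f μ := aestronglyMeasurable_powerMeasure hc
  have hgaussm : ∀ k, AEStronglyMeasurable (gauss k) μ := fun k =>
    (continuous_gauss k).aestronglyMeasurable
  have hgaussHm : ∀ k, AEStronglyMeasurable (gaussHankel a b k) μ := fun k =>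
    (continuous_gaussHankel a b k).aestronglyMeasurable
  have hgauss2 := integrable_gauss_mul_gauss ha
  have hgaussH2 := integrable_gaussHankel_mul_gaussHankel ha hb
  have hf2 : MemLp f 2 μ := by
    refine (memLp_two_iff_integrable_sq_norm hfm).2 ?_
    simp_rw [sq]
    exact (hd.mul hd).integrable ha (by fun_prop)
  have hg2 : ∀ n, MemLp (g n) 2 μ := fun n => memLp_linearCombination hgaussm hgauss2 _
  have hG : ∀ n, hankelTransform a b (g n) =
      Finsupp.linearCombination ℂ (fun k x => (gaussHankel a b k x : ℂ)) (c n) := fun n =>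
    hankelTransform_linearCombination ha hb _
  have hiso : ∀ d : ℕ →₀ ℂ,
      eLpNorm (Finsupp.linearCombination ℂ (fun k x => (gaussHankel a b k x : ℂ)) d) 2 μ =
        eLpNorm (Finsupp.linearCombination ℂ (fun k y => (gauss k y : ℂ)) d) 2 μ :=
    eLpNorm_linearCombination_eq hgaussHm hgaussm hgaussH2 hgauss2
      (integral_gaussHankel_mul_gaussHankel ha hb)
  have hGm : ∀ n, AEStronglyMeasurable (hankelTransform a b (g n)) μ := by
    intro n
    rw [hG]
    exact (memLp_linearCombination hgaussHm hgaussH2 _).1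
  have hD : RapidDecay fun y => ‖f y‖ + Real.exp (-y ^ 2) := hd.add rapidDecay_gauss
  have htend : ∀ x, Tendsto (fun n => hankelTransform a b (g n) x) atTop
      (nhds (hankelTransform a b f x)) := by
    intro x
    obtain ⟨A, B, hAB⟩ := hankelKernel_growth ha b x
    have hK := continuous_hankelKernel ha b x
    have hdom := ((hD.add hd).const_mul_pow_mul A 0).add ((hD.add hd).const_mul_pow_mul B 2)
    refine tendsto_integral_of_dominated_convergence _
      (fun n => (Complex.continuous_ofReal.comp hK).aestronglyMeasurable.mul (hg2 n).1)
      (hdom.integrable ha (by fun_prop)) (fun n => ?_) ?_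
    · filter_upwards [ae_powerMeasure_pos a] with y hy
      have h1 : ‖g n y‖ ≤ ‖f y‖ + Real.exp (-y ^ 2) + ‖f y‖ := by
        have := norm_le_norm_sub_add (g n y) (f y)
        linarith [hbound n y hy]
      rw [norm_mul, Complex.norm_real, Real.norm_eq_abs]
      calc _ ≤ (A + B * y ^ 2) * (‖f y‖ + Real.exp (-y ^ 2) + ‖f y‖) :=
            mul_le_mul (hAB y) h1 (norm_nonneg _) ((abs_nonneg _).trans (hAB y))
        _ = _ := by ring
    · filter_upwards [ae_powerMeasure_pos a] with y hy
      exact (hlim y hy).const_mul _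
  have hconv : Tendsto (fun n => eLpNorm (g n - f) 2 μ) atTop (nhds 0) := by
    have hinteg : Tendsto (fun n => ∫ y, ‖(g n - f) y‖ ^ 2 ∂μ) atTop (nhds (∫ _, (0 : ℝ) ∂μ)) := by
      refine tendsto_integral_of_dominated_convergence
        (fun y => (‖f y‖ + Real.exp (-y ^ 2)) * (‖f y‖ + Real.exp (-y ^ 2)))
        (fun n => ((hg2 n).1.sub hfm).norm.pow 2)
        ((hD.mul hD).integrable ha (by fun_prop)) (fun n => ?_) ?_
      · filter_upwards [ae_powerMeasure_pos a] with y hy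
        have := hbound n y hy
        rw [norm_pow, norm_norm, Pi.sub_apply, sq]
        exact mul_self_le_mul_self (norm_nonneg _) this
      · filter_upwards [ae_powerMeasure_pos a] with y hy
        have := (tendsto_iff_norm_sub_tendsto_zero.1 (hlim y hy)).pow 2
        simpa using this
    simp_rw [fun n => eLpNorm_two_eq_ofReal_integral ((hg2 n).sub hf2)]
    have := ENNReal.tendsto_ofReal (hinteg.rpow_const (p := (2⁻¹ : ℝ)) (Or.inr (by norm_num)))
    simpa using this
  refine integral_norm_sq_eq_of_eLpNorm_eq
    (aestronglyMeasurable_of_tendsto_ae atTop hGm (ae_of_all _ htend)) hf2 ?_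
  refine eLpNorm_eq_of_isometric_approx hfm (fun n => (hg2 n).1) hGm (fun n => ?_)
    (fun m n => ?_) (ae_of_all _ htend) hconv
  · rw [hG, hiso]
  · rw [hG, hG, ← map_sub, hiso, map_sub]

/-- The Schrödinger kernel is the Hankel kernel up to unimodular factors. -/
theorem exists_Skernel_eq (a : ℝ) {t : ℝ} (ht : t ≠ 0) :
    ∃ p q : ℝ → ℝ, Continuous q ∧ ∀ x > 0, ∀ y > 0,
      Skernel a x y t = Complex.exp (p x * Complex.I) *
        ((hankelKernel a (1 / (2 * |t|)) x y : ℂ) * Complex.exp (q y * Complex.I)) := by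
  have ht0 : 0 < 2 * |t| := by positivity
  have hker : ∀ x > 0, ∀ y > 0,
      (((2 * |t|) ^ (-(a + 1) / 2) : ℝ) : ℂ) *
        ((((x * y / (2 * |t|)) ^ ((1 - a) / 2) : ℝ) : ℂ) *
        besselJ (((a - 1) / 2 : ℝ) : ℂ) (x * y / (2 * |t|))) =
      (hankelKernel a (1 / (2 * |t|)) x y : ℂ) := by
    intro x hx y hy
    have h1 : (1 - a) / 2 = 1 - (a + 1) / 2 := by ring
    have h2 : (a - 1) / 2 = (a + 1) / 2 - 1 := by ring
    have h3 : -(a + 1) / 2 = -((a + 1) / 2) := by ring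
    have h4 : (x * y / (2 * |t|) / 2) ^ 2 = (1 / (2 * |t|) * x / 2) ^ 2 * y ^ 2 := by ring
    rw [h1, h2, h3, besselJ_eq (by positivity), h4, Real.rpow_neg ht0.le, ← Complex.ofReal_mul,
      hankelKernel, one_div, Real.inv_rpow ht0.le, mul_assoc]
  rcases lt_or_gt_of_ne ht with h | h
  · refine ⟨fun x => (a + 1) * Real.pi / 4 - x ^ 2 / (4 * |t|), fun y => -(y ^ 2 / (4 * |t|)),
      by fun_prop, fun x hx y hy => ?_⟩
    have hexp : Complex.exp ((((a + 1) * Real.pi / 4 - x ^ 2 / (4 * |t|) : ℝ) : ℂ) * Complex.I) *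
        Complex.exp (((-(y ^ 2 / (4 * |t|)) : ℝ) : ℂ) * Complex.I) =
        Complex.exp (Complex.I * (((a + 1) * Real.pi / 4 : ℝ) : ℂ)) *
          Complex.exp (-Complex.I * (((x ^ 2 + y ^ 2) / (4 * |t|) : ℝ) : ℂ)) := by
      rw [← Complex.exp_add, ← Complex.exp_add]
      congr 1
      push_cast
      ring
    rw [Skernel, if_neg (not_lt.2 h.le), mul_left_comm, hexp, ← hker x hx y hy]
    ring
  · refine ⟨fun x => -((a + 1) * Real.pi / 4) + x ^ 2 / (4 * |t|), fun y => y ^ 2 / (4 * |t|),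
      by fun_prop, fun x hx y hy => ?_⟩
    have hexp : Complex.exp (((-((a + 1) * Real.pi / 4) + x ^ 2 / (4 * |t|) : ℝ) : ℂ) *
          Complex.I) * Complex.exp (((y ^ 2 / (4 * |t|) : ℝ) : ℂ) * Complex.I) =
        Complex.exp (-Complex.I * (((a + 1) * Real.pi / 4 : ℝ) : ℂ)) *
          Complex.exp (Complex.I * (((x ^ 2 + y ^ 2) / (4 * |t|) : ℝ) : ℂ)) := by
      rw [← Complex.exp_add, ← Complex.exp_add]
      congr 1
      push_cast
      ring
    rw [Skernel, if_pos h, mul_left_comm, hexp, ← hker x hx y hy]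
    ring

/-- For `a > -1`, `φ ∈ 𝒮⁺` and `t ≠ 0`, the operator `S_a(t)` is an isometry of `L²_a`. -/
theorem sop_isometry (a : ℝ) (ha : -1 < a) (φ : ℝ → ℂ) (hφ : SPlus φ) (t : ℝ) (ht : t ≠ 0) :
    ∫ x in Ioi (0:ℝ), ‖Sop a t φ x‖ ^ 2 * x ^ a = ∫ x in Ioi (0:ℝ), ‖φ x‖ ^ 2 * x ^ a := by
  obtain ⟨p, q, hq, hS⟩ := exists_Skernel_eq a ht
  set ψ : ℝ → ℂ := fun y => Complex.exp (q y * Complex.I) * φ y with hψ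
  have hnorm : ∀ y, ‖ψ y‖ = ‖φ y‖ := fun y => by
    rw [hψ, norm_mul, Complex.norm_exp_ofReal_mul_I, one_mul]
  have hψc : ContinuousOn ψ (Ioi 0) := by
    have := hφ.1.continuousOn
    fun_prop
  have hψd : RapidDecay fun y => ‖ψ y‖ := by
    intro m
    obtain ⟨C, hC⟩ := hφ.2 m 0
    refine ⟨C, fun y hy => ?_⟩
    have := hC y hy
    rwa [norm_mul, norm_pow, Complex.norm_real, Real.norm_of_nonneg (le_of_lt hy), DIter,
      ← hnorm, ← abs_norm] at this
  have hSop : ∀ x > 0, ‖Sop a t φ x‖ = ‖hankelTransform a (1 / (2 * |t|)) ψ x‖ := by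
    intro x hx
    have : Sop a t φ x =
        Complex.exp (p x * Complex.I) * hankelTransform a (1 / (2 * |t|)) ψ x := by
      rw [Sop, hankelTransform, integral_powerMeasure, ← integral_const_mul]
      refine setIntegral_congr_fun measurableSet_Ioi fun y hy => ?_
      simp only [hS x hx y hy, hψ, Complex.real_smul]
      ring
    rw [this, norm_mul, Complex.norm_exp_ofReal_mul_I, one_mul]
  have key := integral_norm_sq_hankelTransform ha (show 0 < 1 / (2 * |t|) by positivity) hψc hψd
  rw [integral_powerMeasure, integral_powerMeasure] at key
  simp only [smul_eq_mul, mul_comm _ (_ ^ 2), hnorm] at key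
  rw [← key]
  refine setIntegral_congr_fun measurableSet_Ioi fun x hx => ?_
  simp only [hSop x hx]
end

section
/- Let a ≥ 0. There exists a constant C(a) > 0 such that for all x, y > 0 and all t ≠ 0 one has |S_a(x,y,t)| ≤ C(a) |t|^{−(a+1)/2}. -/
open MeasureTheory Filter Set

open Nat in
/-- An exponential generating function with bounded coefficients converges. -/
theorem summable_bounded_mul_pow_div_factorial {b : ℕ → ℝ} {M : ℝ} (hb : ∀ k, |b k| ≤ M) (w : ℝ) :
    Summable fun k : ℕ => b k * (w ^ k / k !) := by
  refine Summable.of_norm_bounded (g := fun k : ℕ => M * (|w| ^ k / k !))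
    ((Real.summable_pow_div_factorial |w|).mul_left M) fun k => ?_
  rw [norm_mul, Real.norm_eq_abs, Real.norm_eq_abs, abs_div, abs_pow, Nat.abs_cast]
  exact mul_le_mul_of_nonneg_right (hb k) (by positivity)

open Nat in
/-- The derivative of an exponential generating function shifts its coefficients. -/
theorem hasDerivAt_tsum_bounded_mul_pow_div_factorial {b : ℕ → ℝ} {M : ℝ} (hb : ∀ k, |b k| ≤ M)
    (w : ℝ) :
    HasDerivAt (fun v : ℝ => ∑' k : ℕ, b k * (v ^ k / k !))
      (∑' k : ℕ, b (k + 1) * (w ^ k / k !)) w := by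
  have hM : 0 ≤ M := (abs_nonneg _).trans (hb 0)
  set R : ℝ := |w| + 1 with hR
  have hR0 : 0 ≤ R := by positivity
  have shift (k : ℕ) (v : ℝ) :
      ((k + 1 : ℕ) : ℝ) * v ^ k / (k + 1)! = v ^ k / k ! := by
    rw [Nat.factorial_succ]
    push_cast
    field_simp
  have hu : Summable fun k : ℕ => M * ((k : ℝ) * R ^ (k - 1) / k !) := by
    refine Summable.mul_left M ((summable_nat_add_iff 1).1 ?_)
    simpa only [Nat.add_sub_cancel, shift] using Real.summable_pow_div_factorial R
  have hderiv (k : ℕ) (v : ℝ) :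
      HasDerivAt (fun v : ℝ => b k * (v ^ k / k !)) (b k * ((k : ℝ) * v ^ (k - 1) / k !)) v :=
    ((hasDerivAt_pow k v).div_const _).const_mul _
  have hbound (k : ℕ) (v : ℝ) (hv : v ∈ Metric.ball (0 : ℝ) R) :
      ‖b k * ((k : ℝ) * v ^ (k - 1) / k !)‖ ≤ M * ((k : ℝ) * R ^ (k - 1) / k !) := by
    have hvR : |v| ≤ R := by simpa using (mem_ball_zero_iff.1 hv).le
    rw [norm_mul, Real.norm_eq_abs, Real.norm_eq_abs, abs_div, abs_mul, abs_pow, Nat.abs_cast,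
      Nat.abs_cast]
    have := hb k
    gcongr
  have hw : w ∈ Metric.ball (0 : ℝ) R := by simp [hR]
  have key := hasDerivAt_tsum_of_isPreconnected hu Metric.isOpen_ball
    (convex_ball (0 : ℝ) R).isPreconnected (fun k v _ => hderiv k v) hbound hw
    (summable_bounded_mul_pow_div_factorial hb w) hw
  have hs : Summable fun k : ℕ => b k * ((k : ℝ) * w ^ (k - 1) / k !) :=
    Summable.of_norm_bounded hu fun k => hbound k w hw
  rw [hs.tsum_eq_zero_add] at key
  simpa only [Nat.add_sub_cancel, shift, Nat.cast_zero, zero_mul, zero_div, mul_zero, zero_add]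
    using key

/-- The coefficients of the entire part of the Bessel function of order `s - 1`. -/
noncomputable def besselCoeff (s : ℝ) (k : ℕ) : ℝ := (-1) ^ k / Real.Gamma (s + k)

open Nat in
/-- The entire part of the Bessel function of order `s - 1`, in the variable `(z / 2) ^ 2`. -/
noncomputable def besselEntire (s w : ℝ) : ℝ := ∑' k : ℕ, besselCoeff s k * (w ^ k / k !)

theorem besselCoeff_succ (s : ℝ) (k : ℕ) : besselCoeff s (k + 1) = -besselCoeff (s + 1) k := by
  unfold besselCoeff
  rw [pow_succ, Nat.cast_succ, add_right_comm, ← add_assoc]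
  ring

theorem besselCoeff_eq_mul {s : ℝ} (hs : 0 < s) (k : ℕ) :
    besselCoeff s k = (s + k) * besselCoeff (s + 1) k := by
  have h : 0 < s + k := by positivity
  unfold besselCoeff
  rw [add_right_comm, Real.Gamma_add_one h.ne']
  have := (Real.Gamma_pos_of_pos h).ne'
  field_simp

theorem exists_abs_besselCoeff_le {s : ℝ} (hs : 0 < s) : ∃ M, ∀ k, |besselCoeff s k| ≤ M := by
  have habs (k : ℕ) : |besselCoeff s k| = (Real.Gamma (s + k))⁻¹ := by
    have := Real.Gamma_pos_of_pos (show 0 < s + k by positivity)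
    rw [besselCoeff, abs_div, abs_pow, abs_neg, abs_one, one_pow, abs_of_pos this, one_div]
  refine ⟨|besselCoeff s 0| + |besselCoeff s 1|, fun k => ?_⟩
  rcases k with _ | k
  · simp
  · suffices |besselCoeff s (k + 1)| ≤ |besselCoeff s 1| from
      this.trans (le_add_of_nonneg_left (abs_nonneg _))
    induction k with
    | zero => simp
    | succ k ih =>
      refine le_trans ?_ ih
      have hpos : 0 < s + ((k + 1 : ℕ) : ℝ) := by positivity
      have hG := Real.Gamma_pos_of_pos hpos
      rw [habs, habs, Nat.cast_succ (k + 1), ← add_assoc, Real.Gamma_add_one hpos.ne']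
      refine inv_anti₀ hG (le_mul_of_one_le_left hG.le ?_)
      push_cast
      have : (0 : ℝ) ≤ k := by positivity
      linarith

theorem hasDerivAt_besselEntire {s : ℝ} (hs : 0 < s) (w : ℝ) :
    HasDerivAt (besselEntire s) (-besselEntire (s + 1) w) w := by
  obtain ⟨M, hM⟩ := exists_abs_besselCoeff_le hs
  have h := hasDerivAt_tsum_bounded_mul_pow_div_factorial hM w
  simp only [besselCoeff_succ, neg_mul, tsum_neg] at h
  exact h

open Nat in
/-- The three-term recurrence for the entire parts of Bessel functions. -/
theorem besselEntire_eq {s : ℝ} (hs : 0 < s) (w : ℝ) :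
    besselEntire s w = s * besselEntire (s + 1) w - w * besselEntire (s + 2) w := by
  obtain ⟨M, hM⟩ := exists_abs_besselCoeff_le hs
  obtain ⟨M₁, hM₁⟩ := exists_abs_besselCoeff_le (show 0 < s + 1 by positivity)
  have h₀ := summable_bounded_mul_pow_div_factorial hM w
  have h₁ := (summable_bounded_mul_pow_div_factorial hM₁ w).mul_left s
  have hsub (k : ℕ) : besselCoeff s k * (w ^ k / k !) -
      s * (besselCoeff (s + 1) k * (w ^ k / k !)) =
        k * (besselCoeff (s + 1) k * (w ^ k / k !)) := by
    rw [besselCoeff_eq_mul hs]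
    ring
  have hshift (k : ℕ) : ((k + 1 : ℕ) : ℝ) *
      (besselCoeff (s + 1) (k + 1) * (w ^ (k + 1) / (k + 1)!)) =
        -w * (besselCoeff (s + 2) k * (w ^ k / k !)) := by
    rw [besselCoeff_succ, Nat.factorial_succ, add_assoc, one_add_one_eq_two, pow_succ]
    push_cast
    field_simp
  have hs₂ := h₀.sub h₁
  have heq := h₀.tsum_sub h₁
  simp only [hsub] at hs₂ heq
  rw [hs₂.tsum_eq_zero_add] at heq
  simp only [hshift, tsum_mul_left, Nat.cast_zero, zero_mul, zero_add] at heq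
  change -w * besselEntire (s + 2) w = besselEntire s w - s * besselEntire (s + 1) w at heq
  linarith

theorem besselEntire_zero (s : ℝ) : besselEntire s 0 = (Real.Gamma s)⁻¹ := by
  unfold besselEntire
  rw [tsum_eq_single 0 fun k hk => by simp [hk]]
  simp [besselCoeff]

/-- The energy `besselEntire s w ^ 2 + w * besselEntire (s + 1) w ^ 2` decreases in `w`. -/
theorem antitone_besselEntire_energy {s : ℝ} (hs : 1 / 2 ≤ s) :
    Antitone fun w => besselEntire s w ^ 2 + w * besselEntire (s + 1) w ^ 2 := by
  have hs0 : 0 < s := by linarith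
  refine antitone_of_hasDerivAt_nonpos
    (f' := fun w => -(2 * s - 1) * besselEntire (s + 1) w ^ 2) (fun w => ?_) fun w => ?_
  · have h := ((hasDerivAt_besselEntire hs0 w).pow 2).add ((hasDerivAt_id w).mul
      ((hasDerivAt_besselEntire (show 0 < s + 1 by positivity) w).pow 2))
    refine h.congr_deriv ?_
    rw [add_assoc s, one_add_one_eq_two]
    have := besselEntire_eq hs0 w
    simp only [id, this, Pi.pow_apply]
    push_cast
    ring
  · have := sq_nonneg (besselEntire (s + 1) w)
    simp only [Pi.zero_apply]
    nlinarith

theorem abs_besselEntire_le {s w : ℝ} (hs : 1 / 2 ≤ s) (hw : 0 ≤ w) :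
    |besselEntire s w| ≤ (Real.Gamma s)⁻¹ := by
  have h := antitone_besselEntire_energy hs hw
  simp only [besselEntire_zero, zero_mul, add_zero] at h
  refine abs_le_of_sq_le_sq (le_trans (le_add_of_nonneg_right (by positivity)) h) ?_
  exact inv_nonneg.2 (Real.Gamma_pos_of_pos (by linarith)).le

theorem besselJ_ofReal (ν : ℝ) {z : ℝ} (hz : 0 < z) :
    besselJ ν z = (((z / 2) ^ ν * besselEntire (ν + 1) ((z / 2) ^ 2) : ℝ) : ℂ) := by
  have hz2 : (0 : ℝ) < z / 2 := by positivity
  unfold besselJ besselEntire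
  rw [← tsum_mul_left, Complex.ofReal_tsum]
  refine tsum_congr fun k => ?_
  have hpow : ((z : ℂ) / 2) ^ (2 * (k : ℂ) + ν) =
      (((z / 2) ^ ν * ((z / 2) ^ 2) ^ k : ℝ) : ℂ) := by
    rw [← pow_mul, ← Real.rpow_natCast (z / 2) (2 * k), ← Real.rpow_add hz2,
      Complex.ofReal_cpow hz2.le]
    push_cast
    rw [add_comm]
  have hΓ : Complex.Gamma ((ν : ℂ) + k + 1) = (Real.Gamma (ν + 1 + k) : ℂ) := by
    rw [← Complex.Gamma_ofReal]
    push_cast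
    congr 1
    ring
  rw [hpow, hΓ, Complex.Gamma_nat_eq_factorial, besselCoeff]
  push_cast
  ring

theorem rpow_neg_mul_norm_besselJ_le {ν z : ℝ} (hν : -1 / 2 ≤ ν) (hz : 0 < z) :
    z ^ (-ν) * ‖besselJ ν z‖ ≤ 2 ^ (-ν) * (Real.Gamma (ν + 1))⁻¹ := by
  have h := abs_besselEntire_le (s := ν + 1) (by linarith) (sq_nonneg (z / 2))
  rw [besselJ_ofReal ν hz, Complex.norm_real, norm_mul, Real.norm_eq_abs, Real.norm_eq_abs,
    abs_of_nonneg (by positivity), ← mul_assoc]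
  have : z ^ (-ν) * (z / 2) ^ ν = 2 ^ (-ν) := by
    rw [Real.div_rpow hz.le zero_le_two, Real.rpow_neg hz.le, Real.rpow_neg zero_le_two]
    have := (Real.rpow_pos_of_pos hz ν).ne'
    field_simp
  rw [this]
  gcongr

theorem norm_Skernel (a : ℝ) {x y t : ℝ} (hx : 0 < x) (hy : 0 < y) (ht : t ≠ 0) :
    ‖Skernel a x y t‖ = (2 * |t|) ^ (-(a + 1) / 2) * ((x * y / (2 * |t|)) ^ ((1 - a) / 2) *
      ‖besselJ (((a - 1) / 2 : ℝ) : ℂ) (x * y / (2 * |t|))‖) := by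
  have ht' : 0 < |t| := abs_pos.2 ht
  have hexp (r : ℝ) : ‖Complex.exp (-Complex.I * r)‖ = 1 := by
    rw [neg_mul, ← mul_neg, ← Complex.ofReal_neg, Complex.norm_exp_I_mul_ofReal]
  unfold Skernel
  split_ifs <;>
  · simp only [norm_mul, hexp, Complex.norm_exp_I_mul_ofReal, Complex.norm_real, one_mul, mul_one]
    rw [Real.norm_of_nonneg (by positivity), Real.norm_of_nonneg (by positivity), mul_assoc]

/-- For `a ≥ 0`, the kernel satisfies `|S_a(x,y,t)| ≤ C(a)|t|^{-(a+1)/2}`. -/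
theorem kernel_dispersive_bound (a : ℝ) (ha : 0 ≤ a) :
    ∃ C > (0:ℝ), ∀ x > (0:ℝ), ∀ y > (0:ℝ), ∀ t : ℝ, t ≠ 0 →
      ‖Skernel a x y t‖ ≤ C * |t| ^ (-(a + 1) / 2) := by
  have hΓ := Real.Gamma_pos_of_pos (show 0 < (a - 1) / 2 + 1 by linarith)
  refine ⟨2 ^ (-(a + 1) / 2) * (2 ^ (-((a - 1) / 2)) * (Real.Gamma ((a - 1) / 2 + 1))⁻¹),
    by positivity, fun x hx y hy t ht => ?_⟩
  have ht' : 0 < |t| := abs_pos.2 ht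
  have h := rpow_neg_mul_norm_besselJ_le (ν := (a - 1) / 2) (z := x * y / (2 * |t|))
    (by linarith) (by positivity)
  rw [norm_Skernel a hx hy ht, Real.mul_rpow zero_le_two ht'.le,
    show (1 - a) / 2 = -((a - 1) / 2) by ring, mul_right_comm]
  gcongr
end
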